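/- Let t ≥ 0 and n = 42t + 21. The edge set of the complete graph K_n can be partitioned into 3t+1 K_{7,7,7}-factors and one K₇-factor; that is, (K_n; K_{7,7,7}^{3t+1}, K₇) exists. -/

import Mathlib

open SimpleGraph

/-- `F` is an `H`-factor (of the complete graph on its vertex type, or of any graph
containing it): every connected component of `F`, viewed as an induced subgraph,
is isomorphic to `H`.  Since `F` is a graph on all of `V`, it is automatically spanning. -/
def IsHFactor {V W : Type*} (H : SimpleGraph W) (F : SimpleGraph V) : Prop :=
  ∀ c : F.ConnectedComponent, Nonempty (F.induce c.supp ≃g H)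

/-- A `C_k`-factor: a spanning subgraph each of whose connected components is a
cycle of length `k` (in particular it is 2-regular). -/
def IsCycleFactor {V : Type*} (k : ℕ) (F : SimpleGraph V) : Prop :=
  IsHFactor (SimpleGraph.cycleGraph k) F

/-- `(G; C_m^r, C_k^s)`: a partition of the edge set of `G` into `r` `C_m`-factors
and `s` `C_k`-factors. -/
def IsCycleDecomp {V : Type*} (G : SimpleGraph V) (m k r s : ℕ) : Prop :=
  ∃ F : Fin r ⊕ Fin s → SimpleGraph V,
    (∀ i, F i ≤ G) ∧
    (∀ e ∈ G.edgeSet, ∃! i, e ∈ (F i).edgeSet) ∧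
    (∀ i : Fin r, IsCycleFactor m (F (Sum.inl i))) ∧
    (∀ j : Fin s, IsCycleFactor k (F (Sum.inr j)))

/-- The complete tripartite graph `K_{7,7,7}` on vertex set `Z₇ × Z₃`, with the three
partite sets `V_i = Z₇ × {i}` for `i ∈ Z₃` (the vertex `j_i` is the pair `(j, i)`). -/
def K777 : SimpleGraph (ZMod 7 × ZMod 3) where
  Adj x y := x.2 ≠ y.2
  symm := ⟨fun _ _ h => h.symm⟩
  loopless := ⟨fun _ h => h rfl⟩

/-- The edge set `E_{ij}(d) = {{l_i, (l+d)_j} : l ∈ Z₇}`. -/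
def Eij (i j : ZMod 3) (d : ZMod 7) : Set (Sym2 (ZMod 7 × ZMod 3)) :=
  {e | ∃ l : ZMod 7, e = s((l, i), (l + d, j))}

/-- A partition of the edge set of `G` into `a` `H₁`-factors and `b` `H₂`-factors,
denoted `(G; H₁^a, H₂^b)`. -/
def IsFactorDecomp {V W₁ W₂ : Type*} (G : SimpleGraph V)
    (H₁ : SimpleGraph W₁) (H₂ : SimpleGraph W₂) (a b : ℕ) : Prop :=
  ∃ F : Fin a ⊕ Fin b → SimpleGraph V,
    (∀ i, F i ≤ G) ∧
    (∀ e ∈ G.edgeSet, ∃! i, e ∈ (F i).edgeSet) ∧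
    (∀ i : Fin a, IsHFactor H₁ (F (Sum.inl i))) ∧
    (∀ j : Fin b, IsHFactor H₂ (F (Sum.inr j)))

/-! ### Triangle factors, Kirkman triple systems, frames -/

/-- At the vertex `p` the relation `R` looks like a disjoint union of triangles. -/
def Tri {P : Type*} (R : P → P → Prop) (p : P) : Prop :=
  ∃ q r, q ≠ p ∧ r ≠ p ∧ q ≠ r ∧ (∀ s, R p s ↔ s = q ∨ s = r) ∧ R q r

/-- A Kirkman triple system, as an edge colouring into triangle factors. -/
def HasKTS (P C : Type) : Prop :=
  ∃ c : P → P → C, (∀ p q, c p q = c q p) ∧ ∀ x p, Tri (fun a b => a ≠ b ∧ c a b = x) p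

/-- Existence of a Kirkman triple system of order `6u+3`. -/
def KT (u : ℕ) : Prop := HasKTS (Fin (6 * u + 3)) (Fin (3 * u + 1))

theorem Tri.mono {P : Type*} {R R' : P → P → Prop} {p : P} (h : Tri R p)
    (h1 : ∀ s, R p s ↔ R' p s) (h2 : ∀ a b, R a b → R' a b) : Tri R' p := by
  obtain ⟨q, r, a, b, c, d, e⟩ := h
  exact ⟨q, r, a, b, c, fun s => (h1 s).symm.trans (d s), h2 _ _ e⟩

theorem Tri.map {P Q : Type*} {R : P → P → Prop} {R' : Q → Q → Prop} {p : P} (f : P → Q)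
    (hf : Function.Injective f) (h : Tri R p)
    (h1 : ∀ s, R' (f p) s ↔ ∃ b, s = f b ∧ R p b) (h2 : ∀ a b, R a b → R' (f a) (f b)) :
    Tri R' (f p) := by
  obtain ⟨q, r, a, b, c, d, e⟩ := h
  refine ⟨f q, f r, hf.ne a, hf.ne b, hf.ne c, fun s => ?_, h2 _ _ e⟩
  rw [h1]
  constructor
  · rintro ⟨b, rfl, hb⟩
    rcases (d b).1 hb with rfl | rfl <;> simp
  · rintro (rfl | rfl)
    · exact ⟨q, rfl, (d q).2 (Or.inl rfl)⟩
    · exact ⟨r, rfl, (d r).2 (Or.inr rfl)⟩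

theorem HasKTS.congr {P C P' C' : Type} (h : HasKTS P C) (e : P ≃ P') (k : C ≃ C') :
    HasKTS P' C' := by
  obtain ⟨c, hs, ht⟩ := h
  refine ⟨fun p q => k (c (e.symm p) (e.symm q)), fun p q => by simp only [hs (e.symm p)], ?_⟩
  intro x p
  have := (ht (k.symm x) (e.symm p)).map (R' := fun a b => a ≠ b ∧ k (c (e.symm a) (e.symm b)) = x)
    e e.injective ?_ ?_
  · simpa using this
  · intro s
    constructor
    · rintro ⟨h1, h2⟩
      refine ⟨e.symm s, by simp, ?_, by simpa [Equiv.eq_symm_apply] using h2⟩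
      rintro h
      exact h1 (by simp [h])
    · rintro ⟨b, rfl, h1, h2⟩
      refine ⟨fun h => h1 (e.injective h), by simpa [Equiv.eq_symm_apply] using h2⟩
  · rintro a b ⟨h1, h2⟩
    refine ⟨fun h => h1 (e.injective h), by simpa [Equiv.eq_symm_apply] using h2⟩

theorem HasKTS.toKT {P C : Type} [Fintype P] [Fintype C] (h : HasKTS P C) (u : ℕ)
    (hP : Fintype.card P = 6 * u + 3) (hC : Fintype.card C = 3 * u + 1) : KT u :=
  h.congr (Fintype.equivFinOfCardEq hP) (Fintype.equivFinOfCardEq hC)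

theorem KT_zero : KT 0 := by
  refine ⟨fun _ _ => 0, fun _ _ => rfl, ?_⟩
  intro x p
  refine ⟨p + 1, p + 2, ?_⟩
  revert x p
  decide

/-! ### Cyclic constructions -/

theorem ktsA {G I K : Type} [AddCommGroup G] (D : I → I → G → G ⊕ K)
    (hs : ∀ i j d, D j i (-d) = Sum.map (· - d) id (D i j d))
    (ht : ∀ i w, ∃ a b : I × G, a ≠ (i, 0) ∧ b ≠ (i, 0) ∧ a ≠ b ∧
      (∀ k : I × G, ((i, 0) ≠ k ∧ D i k.1 k.2 = w) ↔ k = a ∨ k = b) ∧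
      D a.1 b.1 (b.2 - a.2) = Sum.map (· - a.2) id w) :
    HasKTS (I × G) (G ⊕ K) := by
  refine ⟨fun p q => Sum.map (· + p.2) id (D p.1 q.1 (q.2 - p.2)), ?_, ?_⟩
  · intro p q
    have := hs p.1 q.1 (q.2 - p.2)
    rw [neg_sub] at this
    simp only [this]
    cases D p.1 q.1 (q.2 - p.2)
    · simp only [Sum.map_inl, Sum.inl.injEq]
      abel
    · simp
  · rintro x ⟨i, z⟩
    obtain ⟨a, b, h1, h2, h3, h4, h5⟩ := ht i (Sum.map (· - z) id x)
    have key : ∀ w : G ⊕ K, ∀ t : G, Sum.map (· + t) id w = x ↔ w = Sum.map (· - t) id x := by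
      intro w t
      cases w <;> cases x <;> simp [eq_sub_iff_add_eq]
    have ne : ∀ a : I × G, ∀ s t : G, a ≠ (i, s) ↔ (a.1, a.2 + t) ≠ (i, s + t) := by
      rintro ⟨a, b⟩ s t
      simp
    refine ⟨(a.1, a.2 + z), (b.1, b.2 + z), ?_, ?_, ?_, ?_, ?_⟩
    · simpa using (ne a 0 z).1 h1
    · simpa using (ne b 0 z).1 h2
    · simpa [Prod.ext_iff] using h3
    · rintro ⟨j, s⟩
      have := h4 (j, s - z)
      beta_reduce
      rw [key]
      simp only [Prod.ext_iff, ne_eq] at this ⊢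
      rw [sub_eq_iff_eq_add, sub_eq_iff_eq_add] at this
      rw [← this]
      simp [eq_sub_iff_add_eq]
    · refine ⟨by simpa [Prod.ext_iff] using h3, ?_⟩
      rw [key]
      simp only [add_sub_add_right_eq_sub]
      rw [h5]
      cases x <;> simp [sub_sub, add_comm]

theorem ktsB {G : Type} [AddCommGroup G] (D : Fin 2 → Fin 2 → G → G)
    (hs : ∀ i j d, D j i (-d) = D i j d - d)
    (h0 : ∀ i, ∀ k : Fin 2 × G, ((i, 0) ≠ k ∧ D i k.1 k.2 = 0) ↔ k = (i + 1, 0))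
    (ht : ∀ i w, w ≠ 0 → ∃ a b : Fin 2 × G, a ≠ (i, 0) ∧ b ≠ (i, 0) ∧ a ≠ b ∧
      (∀ k : Fin 2 × G, ((i, 0) ≠ k ∧ D i k.1 k.2 = w) ↔ k = a ∨ k = b) ∧
      D a.1 b.1 (b.2 - a.2) = w - a.2) :
    HasKTS (Option (Fin 2 × G)) G := by
  let c : Option (Fin 2 × G) → Option (Fin 2 × G) → G := fun p q =>
    match p, q with
    | none, none => 0
    | none, some q => q.2
    | some p, none => p.2
    | some p, some q => D p.1 q.1 (q.2 - p.2) + p.2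
  have c01 : ∀ z i, c (some (i, z)) (some (i + 1, z)) = z := by
    intro z i
    simp only [c, sub_self]
    rw [((h0 i (i + 1, 0)).2 rfl).2, zero_add]
  have i1 : ∀ i : Fin 2, i + 1 ≠ i := by decide
  refine ⟨c, ?_, ?_⟩
  · rintro (_ | p) (_ | q) <;> try rfl
    have := hs p.1 q.1 (q.2 - p.2)
    rw [neg_sub] at this
    simp only [c, this]
    abel
  · rintro x (_ | ⟨i, z⟩)
    · refine ⟨some (0, x), some (1, x), by simp, by simp, by simp, ?_, by simp, c01 x 0⟩
      rintro (_ | ⟨j, s⟩)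
      · simp
      · fin_cases j <;> simp [c]
    · by_cases hx : x = z
      · subst hx
        refine ⟨none, some (i + 1, x), by simp, by simp [i1], by simp, ?_, by simp, rfl⟩
        rintro (_ | ⟨j, s⟩)
        · simp [c]
        · have := h0 i (j, s - x)
          simp only [Prod.ext_iff, ne_eq, sub_eq_zero] at this
          simp only [c, Option.some_inj, Prod.ext_iff, ne_eq, reduceCtorEq, false_or]
          rw [← this]
          simp [eq_comm (a := (0 : G)), sub_eq_zero, eq_comm (a := s)]
      · obtain ⟨a, b, h1, h2, h3, h4, h5⟩ := ht i (x - z) (sub_ne_zero.2 hx)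
        refine ⟨some (a.1, a.2 + z), some (b.1, b.2 + z), ?_, ?_, ?_, ?_, ?_⟩
        · simpa [Prod.ext_iff] using h1
        · simpa [Prod.ext_iff] using h2
        · simpa [Prod.ext_iff] using h3
        · rintro (_ | ⟨j, s⟩)
          · simp [c, Ne.symm hx]
          · have := h4 (j, s - z)
            simp only [Prod.ext_iff, ne_eq] at this
            rw [sub_eq_iff_eq_add, sub_eq_iff_eq_add] at this
            simp only [c, Option.some_inj, Prod.ext_iff, ne_eq]
            rw [← this]
            simp [eq_sub_iff_add_eq]
        · refine ⟨by simpa [Prod.ext_iff] using h3, ?_⟩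
          simp only [c, add_sub_add_right_eq_sub, h5]
          abel

/-! ### Checking the tables -/

/-- Byte `n` of the table `T`. -/
def byteAt (T n : ℕ) : ℕ := T / 2 ^ (8 * n) % 256

/-- Table lookup, format A. -/
def lookA (u T : ℕ) (i j : Fin 3) (d : Fin (2 * u + 1)) : Fin (2 * u + 1) ⊕ Fin u :=
  let w := byteAt T ((3 * i.1 + j.1) * (2 * u + 1) + d.1)
  if w < 2 * u + 1 then Sum.inl (Fin.ofNat _ w)
  else if h : w - (2 * u + 1) < u then Sum.inr ⟨w - (2 * u + 1), h⟩ else Sum.inl 0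

/-- Table lookup, format B. -/
def lookB (u T : ℕ) (i j : Fin 2) (d : Fin (3 * u + 1)) : Fin (3 * u + 1) :=
  Fin.ofNat _ (byteAt T ((2 * i.1 + j.1) * (3 * u + 1) + d.1))

/-- A table entry read as a point. -/
def pointAt (m n T k : ℕ) [NeZero m] [NeZero n] : Fin m × Fin n :=
  let w := byteAt T k
  (Fin.ofNat m (w / n), Fin.ofNat n w)

/-- The two other points in the triangle of colour `w` at `(i, 0)`, format A. -/
def nbA (u N : ℕ) (i : Fin 3) (w : Fin (2 * u + 1) ⊕ Fin u) :
    (Fin 3 × Fin (2 * u + 1)) × (Fin 3 × Fin (2 * u + 1)) :=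
  let k := (3 * u + 1) * i.1 + Sum.elim (fun e => e.1) (fun e => e.1 + (2 * u + 1)) w
  (pointAt 3 (2 * u + 1) N (2 * k), pointAt 3 (2 * u + 1) N (2 * k + 1))

/-- The two other points in the triangle of colour `w` at `(i, 0)`, format B. -/
def nbB (u N : ℕ) (i : Fin 2) (w : Fin (3 * u + 1)) :
    (Fin 2 × Fin (3 * u + 1)) × (Fin 2 × Fin (3 * u + 1)) :=
  let k := (3 * u + 1) * i.1 + w.1
  (pointAt 2 (3 * u + 1) N (2 * k), pointAt 2 (3 * u + 1) N (2 * k + 1))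

/-- The complete check of a table in format A. -/
def checkA (u T N : ℕ) : Prop :=
  (∀ i j d, lookA u T j i (-d) = Sum.map (· - d) id (lookA u T i j d)) ∧
  (∀ i w, (nbA u N i w).1 ≠ (i, 0) ∧ (nbA u N i w).2 ≠ (i, 0) ∧
    (nbA u N i w).1 ≠ (nbA u N i w).2 ∧
    lookA u T i (nbA u N i w).1.1 (nbA u N i w).1.2 = w ∧
    lookA u T i (nbA u N i w).2.1 (nbA u N i w).2.2 = w ∧
    lookA u T (nbA u N i w).1.1 (nbA u N i w).2.1 ((nbA u N i w).2.2 - (nbA u N i w).1.2) =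
      Sum.map (· - (nbA u N i w).1.2) id w) ∧
  (∀ i k l, (i, 0) ≠ (k, l) → (k, l) = (nbA u N i (lookA u T i k l)).1 ∨
    (k, l) = (nbA u N i (lookA u T i k l)).2)

instance (u T N : ℕ) : Decidable (checkA u T N) := by unfold checkA; infer_instance

/-- The complete check of a table in format B. -/
def checkB (u T N : ℕ) : Prop :=
  (∀ i j d, lookB u T j i (-d) = lookB u T i j d - d) ∧
  (∀ i, lookB u T i (i + 1) 0 = 0) ∧
  (∀ i w, w ≠ 0 → (nbB u N i w).1 ≠ (i, 0) ∧ (nbB u N i w).2 ≠ (i, 0) ∧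
    (nbB u N i w).1 ≠ (nbB u N i w).2 ∧
    lookB u T i (nbB u N i w).1.1 (nbB u N i w).1.2 = w ∧
    lookB u T i (nbB u N i w).2.1 (nbB u N i w).2.2 = w ∧
    lookB u T (nbB u N i w).1.1 (nbB u N i w).2.1 ((nbB u N i w).2.2 - (nbB u N i w).1.2) =
      w - (nbB u N i w).1.2) ∧
  (∀ i k l, (i, 0) ≠ (k, l) → if lookB u T i k l = 0 then (k, l) = (i + 1, 0) else
    (k, l) = (nbB u N i (lookB u T i k l)).1 ∨ (k, l) = (nbB u N i (lookB u T i k l)).2)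

instance (u T N : ℕ) : Decidable (checkB u T N) := by unfold checkB; infer_instance

theorem checkA.kt {u T N : ℕ} (h : checkA u T N) : KT u := by
  refine (ktsA (lookA u T) h.1 ?_).toKT u ?_ ?_
  · intro i w
    obtain ⟨h1, h2, h3, h4, h5, h6⟩ := h.2.1 i w
    refine ⟨_, _, h1, h2, h3, ?_, h6⟩
    rintro ⟨k, l⟩
    constructor
    · rintro ⟨h7, rfl⟩
      exact h.2.2 i k l h7
    · rintro (h7 | h7) <;> rw [h7]
      · exact ⟨h1.symm, h4⟩
      · exact ⟨h2.symm, h5⟩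
  · simp; ring
  · simp; ring

theorem checkB.kt {u T N : ℕ} (h : checkB u T N) : KT u := by
  refine (ktsB (lookB u T) h.1 ?_ ?_).toKT u ?_ ?_
  · rintro i ⟨k, l⟩
    constructor
    · rintro ⟨h7, h8⟩
      simpa only [h8, if_true] using h.2.2.2 i k l h7
    · intro h7
      rw [h7]
      refine ⟨?_, h.2.1 i⟩
      revert i
      simp
  · intro i w hw
    obtain ⟨h1, h2, h3, h4, h5, h6⟩ := h.2.2.1 i w hw
    refine ⟨_, _, h1, h2, h3, ?_, h6⟩
    rintro ⟨k, l⟩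
    constructor
    · rintro ⟨h7, rfl⟩
      simpa only [hw, if_false] using h.2.2.2 i k l h7
    · rintro (h7 | h7) <;> rw [h7]
      · exact ⟨h1.symm, h4⟩
      · exact ⟨h2.symm, h5⟩
  · simp; ring
  · simp

/-! ### Small frames -/

/-- A Kirkman frame with groups of size six on the groups in `K`. -/
def FrameOn (K : Fin 5 → Prop) (F : Fin 5 × Fin 6 → Fin 5 × Fin 6 → Fin 5 × Fin 3) : Prop :=
  (∀ p q, F p q = F q p) ∧
  (∀ p q, K p.1 → K q.1 → p.1 ≠ q.1 → K (F p q).1 ∧ (F p q).1 ≠ p.1) ∧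
  (∀ x p, K x.1 → K p.1 → x.1 ≠ p.1 →
    Tri (fun a b => K a.1 ∧ K b.1 ∧ a.1 ≠ b.1 ∧ F a b = x) p)

/-- Table lookup for frames. -/
def lookF (T : ℕ) (p q : Fin 5 × Fin 6) : Fin 5 × Fin 3 :=
  pointAt 5 3 T (30 * (6 * p.1.1 + p.2.1) + (6 * q.1.1 + q.2.1))

/-- The two other points in the triangle of colour `x` at `p`. -/
def nbF (N : ℕ) (p : Fin 5 × Fin 6) (x : Fin 5 × Fin 3) : (Fin 5 × Fin 6) × (Fin 5 × Fin 6) :=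
  let k := 15 * (6 * p.1.1 + p.2.1) + (3 * x.1.1 + x.2.1)
  (pointAt 5 6 N (2 * k), pointAt 5 6 N (2 * k + 1))

/-- The complete check of a frame on the first `n` groups. -/
def checkF (n T N : ℕ) : Prop :=
  (∀ a s b t, lookF T (a, s) (b, t) = lookF T (b, t) (a, s)) ∧
  (∀ a : Fin 5, a.1 < n → ∀ b : Fin 5, b.1 < n → a ≠ b → ∀ s t,
    (lookF T (a, s) (b, t)).1.1 < n ∧ (lookF T (a, s) (b, t)).1 ≠ a ∧
    ((b, t) = (nbF N (a, s) (lookF T (a, s) (b, t))).1 ∨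
     (b, t) = (nbF N (a, s) (lookF T (a, s) (b, t))).2)) ∧
  (∀ a : Fin 5, a.1 < n → ∀ b : Fin 5, b.1 < n → b ≠ a → ∀ s t,
    (nbF N (a, s) (b, t)).1.1.1 < n ∧ (nbF N (a, s) (b, t)).2.1.1 < n ∧
    (nbF N (a, s) (b, t)).1.1 ≠ a ∧ (nbF N (a, s) (b, t)).2.1 ≠ a ∧
    (nbF N (a, s) (b, t)).1.1 ≠ (nbF N (a, s) (b, t)).2.1 ∧
    lookF T (a, s) (nbF N (a, s) (b, t)).1 = (b, t) ∧
    lookF T (a, s) (nbF N (a, s) (b, t)).2 = (b, t) ∧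
    lookF T (nbF N (a, s) (b, t)).1 (nbF N (a, s) (b, t)).2 = (b, t))

set_option synthInstance.maxHeartbeats 400000 in
set_option synthInstance.maxSize 4000 in
instance (n T N : ℕ) : Decidable (checkF n T N) := by unfold checkF; infer_instance

theorem checkF.frame {n T N : ℕ} (h : checkF n T N) : FrameOn (fun i => i.1 < n) (lookF T) := by
  refine ⟨fun p q => h.1 _ _ _ _, fun p q h1 h2 h3 => ?_, fun x p h1 h2 h3 => ?_⟩
  · have := h.2.1 _ h1 _ h2 h3 p.2 q.2
    exact ⟨this.1, this.2.1⟩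
  · obtain ⟨a1, a2, a3, a4, a5, a6, a7, a8⟩ := h.2.2 _ h2 _ h1 h3 p.2 x.2
    refine ⟨_, _, fun e => a3 (by rw [e]), fun e => a4 (by rw [e]), fun e => a5 (by rw [e]), ?_,
      a1, a2, a5, a8⟩
    intro s
    constructor
    · rintro ⟨b1, b2, b3, rfl⟩
      exact (h.2.1 _ b1 _ b2 b3 p.2 s.2).2.2
    · rintro (h7 | h7) <;> rw [h7]
      · exact ⟨h2, a1, a3.symm, a6⟩
      · exact ⟨h2, a2, a4.symm, a7⟩

/-- Byte table of a Kirkman frame of type 6^4: colours. -/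
def tabF4 : ℕ :=
  84961621179908194217616760132932874272862416745554401636517996255253308162021559254732299786129401716683030269903207552066167154846251764648010056108401231303882846366621694401941372289054021591245824219514272410792518783453883015822384760648449209294584110228653800838975389115845342578698121712592396669259189805362090712793984997164137838311988119968766308285532806267234846504067019764402658287439808267855721169365948508186753288215884370475681390764584725297303232352039834227946620372448211644273602999681458360275318826880345651325021861091706450369289714122762018214715822496605978942324237274259361591533899602519930353652920846957921383835505394393204368188198549007267958446381696910551695556292580737493986370117410127674328564064545984309208120290232157258975459390292407695821712723555180764099560042054017310039287829505816762614215969864736514290810961758673240123692714495109994094647853164356602173278392954103524995156369069546261369754217327477603796289745395924699930399703516891975674297463283209617314998296112658808365343721720241676592100308445190432988368956935984053487448850510089115970172701082662099258186044194991421182060356511989971954857545603456097763046051183043671038791820360714836313618764233623360606419774302428606509782393621284079566882010839817934858648577665980829254557739189454732389312352544879740726388472572839218117572610138853341404615804721132855896613993064562409741473775554631638198364670133188539657624883469783599330128237293566135741129066319617614521639807916406721204351093598199718279590329921130188594295777096814514737316804189721973579142238577705498672717360273980851007862831598381940879439673472344495698829347316444087220193823031296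

/-- Byte table of a Kirkman frame of type 6^4: triangles. -/
def nbrF4 : ℕ :=
  2542300953467769202211703889351980455345433915555427625757452879223395073187277933738651675362369954933480321271168308257096989140823548806862079753015173970663251126815104104841344891800593069209035980838989632068482205157623705249303060085985754814854560568023580786678082593716881682621966680432523259116917153765249645696766192672460939639183140422564685269346177875078745015701559598286005070797442470029781475019156625346314014313118870242047843825788755550810149290389416847116709899517093779682174240574382243272157435811548284965904454085174576005092039519928110450717771954935463711332556865248927546388600109866280482408523681046119599840510129132015793668352158891732543235417446476902911779425107800034784000834462787950439655502875754929955654703007379335248736751747181023063941267561607255474293776688369379465034708863693710356643840284254231683340900776757545227439311839030340321198900880475785472436420235995803836392896142314038033800914551270929064640261780948438857979967291645416239419216935942244120299121751865597528250085126697928903141556647161424269732444211933503260000546060889321354584005582940755862910554576936617329511507217002442862209355174650866762571127892563440219891524812308201546372969222615827134528578649387104492240627346151923108254644176303420382624183025957653671467903534800213461959308449674738299004780210761333224333432558893875186222982442737228822177716585332109670860152525947365559796383495822912177396689401983739774987706246911632699454214317480116659478870356086438843962797094734635166394714805138512725286604966381591459799675838156243176059190695776540785059911928055548330022047146630259237180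40440093195282493893721373676471457132606128128

theorem frame4 : FrameOn (fun i => i.1 < 4) (lookF tabF4) :=
  checkF.frame (N := nbrF4) (by decide +kernel)

/-- Byte table of a Kirkman frame of type 6^5: colours. -/
def tabF5 : ℕ :=
  1819553948537889415375790711666750328252320070713130588552145809695186858509464843733104336751450094187302721754235489107646891151287066456512972021308287591872054371978716856758401134324796353461517297546820096960033324224775720642163645802566592494891239861582693873162742780467328643639660366729336084907561065482257289472771965898853072145830654506844689896378599636135150730990565300124644256468155788006205394978142708950450137401331101842031148862205621017134600778278204661763267074472343789567177162838052641844032335022930625544614941846070444541794245896167750865956286395124743983919274541307357447524631898397415789753492482246688821319499974129696874912459924992890924945590055714883414681635780375050070414057359976802707492569868524327817106344241935266802896143878911801365649132987079098691341988647061840965380906034809007946551793102720801084805532174387513510831409081056103270991785687529577247622895011794404256575245323884957348539834385613425585803628130352648309010272544049612075777509001807996982492074189454721534472026665569048306715651338846174891697770075983880957028374427481587213197523897271911067847364580242060451465835146105584645378174222499064980308357738563540569518284213134563920370111379647547823779272538457885083436745274579877458156408053510533471619951645294512743591280016642617023326364770201589271750025646148048105993589511654446855806678118873604984305026442196031106863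021394351807191761973493523867102588990688381085937170997184821481469588611899391090244820061020635624022335007145848852257071842415472013673816552467980943210877132646922231955255064274964235018587974596809895583169072976037410880271072703630652732951423690228698251002361417739800796497829297625124656014427203539202127187638899068801734706476588753690998758051473270535115177359755468421245109538591369858971296072463266358476950161844671002557709110804068450354848287550211229895553656912860575113577034648937341787104185899269802324104557032859030219474503633452768049405153374025579972598061031449122252842783963626469054398307803798359912205862016749372163539727743785228669865663628766971585076130717642666181359870935040

/-- Byte table of a Kirkman frame of type 6^5: triangles. -/
def nbrF5 : ℕ :=
  5801980183055376919590312669595038010818381879002950441608236094248863832901801370047349757029073114514652142265294809523392273256587682256301207217384003507141757356184776807021590271753446896532555942267192661137055388504309360951854352210393741767023984900197330162741770823144766947939405649955350299220991311150372854700160979892153433895967598190660089676321457545010568172304324275382394623334886756073540193847979830668814346785894351122066853745028367218388140196235785781900155688138484733690516418063798299954412200587254059330517957265054416630249615063451189409868980027201291947967231067167169701117676090584266352515583054025705468176922960232353862433277290162201038249853005072007773623128466879800087451389871053607148450504290349649572843571967658075417349989747228584799057187986428341313483751495519286398971171155116760938234279274024350444948733059608832651750833140282668018160796071322667273146473275851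590132977376563891473976137315806064620064668093722618002847262875781918427369829796735377290158882360707754240720129758084014049602843227065833266933491724429255869990233473090110277949960090801514960373772557638027793039317326856179109590432707281820900679498550290173665547786997198719857197952180015460300556347368872206248715391469887308668179451947705445535509870641894770116093545534977524190956436755830674796912221877387962338652394690141584909157017297745562039302463743630560405721499557096030201360039246926582796089039645981652536652439348081691395026894421693440808960351966821123307377010274964251316852868931285177673213540057286825291522279375597594995493893374407274176066943053906925738358105903825070310265573595743267309501988492116328716992797848709330556067928459133912854967309415022973571962256650649655953109376723466976131856760718540069681996610999791090598896514065400790648786824310746436168995659439686986345313196392424685879695764204380836887143855870735115691968149947041451190152442798714962650635117917993597403213464788203750534055972087952151381954277415715512697047759114597295279356830725658527537107859213977116133395383574548228960685053671983728147627700514753798450934835513917440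

theorem frame5 : FrameOn (fun i => i.1 < 5) (lookF tabF5) :=
  checkF.frame (N := nbrF5) (by decide +kernel)

/-- Difference table (format A) of a Kirkman triple system of order 9. -/
def tabA1 : ℕ :=
  1606987276802135418318353067565943499570672907002115103129856

/-- Triangle table (format A) of a Kirkman triple system of order 9. -/
def nbrA1 : ℕ :=
  73561662569673232213256798374604377542908050504681587714

theorem KT_1 : KT 1 := checkA.kt (T := tabA1) (N := nbrA1) (by decide +kernel)

/-- Difference table (format A) of a Kirkman triple system of order 21. -/
def tabA3 : ℕ :=
  1027745191726662105548751245970442892475714698240535261396900584198320702158998173871568343465474047163341195839811687109641804616476317128051166019840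

/-- Triangle table (format A) of a Kirkman triple system of order 21. -/
def nbrA3 : ℕ :=
  158766511608472827745848658030004812658752102248846022929479408115671513980723069433298312694245789304792564913401623784406474859132874276275714

theorem KT_3 : KT 3 := checkA.kt (T := tabA3) (N := nbrA3) (by decide +kernel)

/-- Difference table (format A) of a Kirkman triple system of order 39. -/
def tabA6 : ℕ :=
  13702783796914080792047895673100201501563086655322527972609944749842052796494238658692951118743456164114585472607628836077623017229054936363086600814576800450222231704905688625749724130352551489091201574370029945315250780421303022692177776970967829695995572689210316403898512247296

/-- Triangle table (format A) of a Kirkman triple system of order 39. -/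
def nbrA6 : ℕ :=
  2303403462474762154200876919725226486402133049698591347020240485074984643068880799992592577968694308466800285912011097422658639441989521707677964383230516500526184113864983596646702237763865218968964778839047505393383158443092094186219635957245085093012436952175428158752774

theorem KT_6 : KT 6 := checkA.kt (T := tabA6) (N := nbrA6) (by decide +kernel)

/-- Difference table (format A) of a Kirkman triple system of order 45. -/
def tabA7 : ℕ :=
  657816600694763867092705932670616865301995644083531639876341877713794443981804963181105302496773086862663900258683203196284202378222682946690391598664011524715219379694227092844587682501523221879342896714014946682348500579929873456115745987583295670438373640123826865257389860373428154855439504627835327683468656904509982976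

/-- Triangle table (format A) of a Kirkman triple system of order 45. -/
def nbrA7 : ℕ :=
  66518536928168164085040738257265767384143281382902614086597984998413849404577197218031357218382627197200940095684968972663202688035837928300277994617362329038187898622955352868362261012194713353822501974396945583260344145345185566954306931199527236405610909278290861701122956980564124078783244152914973418482329391370

theorem KT_7 : KT 7 := checkA.kt (T := tabA7) (N := nbrA7) (by decide +kernel)

/-- Difference table (format A) of a Kirkman triple system of order 51. -/
def tabA8 : ℕ :=
  5703966029764558252844575205564734979670013094644038136021586236626677665478911903802805890676559759222842573800563237521270028541621229175006599114692831280502960323689964986147566869287182695918061633620858726352224562675110858979094057988496601379373752502413603876307985739260001957801693437930174383862010011379140674023204568975533393417940840670510871090758400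

/-- Triangle table (format A) of a Kirkman triple system of order 51. -/
def nbrA8 : ℕ :=
  1143441339574104291941362612139740585568691436435673216343737032161172943966553453248334363407527685873031169652419594999638086685361739034919834921570470990180213682220263415493944810068876481968577705049741768556209493029433311338498082220060193554117633435383319238504229581873473479597819168555658362578150197186440491972892182209673425805304922680261355794

theorem KT_8 : KT 8 := checkA.kt (T := tabA8) (N := nbrA8) (by decide +kernel)

/-- Difference table (format A) of a Kirkman triple system of order 57. -/
def tabA9 : ℕ :=
  454247273336269760144162860347884156741979063315013496595569032538343755833854327868109018412436188668759459541309260590369131687803473893119814094330578113490425244270938689302248512810872504914011217173905654390822209474166776840920598900774715700781462164267540118972158836328589291951695121537953699608824876780912034654102852348722355222204052488824668369178740401360503089905210329963893000824226627715328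

/-- Triangle table (format A) of a Kirkman triple system of order 57. -/
def nbrA9 : ℕ :=
  36057864885949047930680477548256784281387687003678007779004958319185212048062878952653714361746510663515277654494092697012696906014769139191528544548168168843597536828964906595150171796052459611805267184513012208699533966130444798235710241092094435184709895223451600874625265902936130099201452478364105932913133476545061346681152017297849286867231738800457621897776514963208153552148760534609421022597646

theorem KT_9 : KT 9 := checkA.kt (T := tabA9) (N := nbrA9) (by decide +kernel)

/-- Difference table (format A) of a Kirkman triple system of order 63. -/
def tabA10 : ℕ :=
  5079301087518099554175073452739175183546866648664958928156746528589206073045815754940803325825607285962994410404744616540168128089773793931221284470136583424006161332383350473985838266688161879011756639277505443762746244640185799153255276032503657236117086582986113670918276292052005762939373058711443714137675193784134579373878089558644849349163832348183009393785617122367033326554876629363575236338723781486377234825837734609339699928614981144854924800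

/-- Triangle table (format A) of a Kirkman triple system of order 63. -/
def nbrA10 : ℕ :=
  1104249854868006866186660897525484841386646853850937654103821809109957920158976159274100325449699021512471485829989074714086342358170793129630093578405948161327700696681561714291252221056246674102074607600570803988087190379131386611250885877746871773964985520580267105454456817866379662039187931388395907238658775897978831904547400163977661684856123933426623712588632538687950066390502477316820366787257985811062100400257448660178101888152675695151

theorem KT_10 : KT 10 := checkA.kt (T := tabA10) (N := nbrA10) (by decide +kernel)

/-- Difference table (format A) of a Kirkman triple system of order 69. -/
def tabA11 : ℕ :=
  151113754597316979693544794104726245944518289239499020051226853029915055268209642710389046328616664530603353546548099174084378317074015730294259498749567802469601259500540303139123947728272218545914520346128936333945591630735777661386780361708762295622694370514008392549574474493155945924167966487241514958937172126540606336616505112107886819303325769198180005661754089026548739582092480225044098303215250708316520349041308461069213695159430841746730945584772399679200488968104865589656536744006656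

/-- Triangle table (format A) of a Kirkman triple system of order 69. -/
def nbrA11 : ℕ :=
  22419928658391940227654600668618920423336650578934336625317373496136746444290996286023927535605757738945755665270883578374005763341407607802022768142881003357142277368703498682613605220430685140743446245837053118670404395708212457207411976384325232929473772941560584321522548991088034807406438798101051066862751137341207896213361380984598334451755163103023411235221184205177723374175957019993414322697198938541565151510921663370624303418208605664200207383237278496113489593167044485228666629

theorem KT_11 : KT 11 := checkA.kt (T := tabA11) (N := nbrA11) (by decide +kernel)

/-- Difference table (format A) of a Kirkman triple system of order 75. -/
def tabA12 : ℕ :=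
  1962417697601348776400186206991273446762671135333244943247256537394401025855981387410115527664838959797521611534111433653332203140871745221602115657428147478080136414740083982674883395734691840288500989467272808251026889480574872500760603209640700177816272673549858542492476128486971297433605909561192745893463255481728042566456992049282017866432632910699246920315605816608188292517031972132068960926024424951800246006202273001842630862523269751416223544677219662168993774340628088571922844239536815631951192699296212745577370054934495826176

/-- Triangle table (format A) of a Kirkman triple system of order 75. -/
def nbrA12 : ℕ :=
  583545549189438446217696710607806963434164896446348716189849326517240673809612118378554890642851878535746363165146154013191921913841285876771052531072072868453617240299041776394738529872382165703446860350753813985175736859383660965415717147889403206765340283972392218602737608363519517240991149239391887945850730651750360732265070037489105983145046604315489710019540678106042734436707531141140328846485941141407817097387360163769228128148540819697915273495166915712332148912400409030244734305411024417196825380267812615083496668271885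

theorem KT_12 : KT 12 := checkA.kt (T := tabA12) (N := nbrA12) (by decide +kernel)

/-- Difference table (format A) of a Kirkman triple system of order 81. -/
def tabA13 : ℕ :=
  93579343804675047327639055732055215829165437753260361719794849236563083253719002043436174581065595839798127166736730862784136270956564646649361439101500013443322183618065933745108714493698181053628557997968208989210467751735463316758464258855178685543521345623708084097419509640689612001830786875249256109026459471955248738484209598346145311831437689885314029430325995241934832219865118694018910425104575826563365748996117920681908370310890551621433970340398196962336015480936261274081487780587194181801444998207544996625847498770184981349124383005004858856211960324261372727648262400

/-- Triangle table (format A) of a Kirkman triple system of order 81. -/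
def nbrA13 : ℕ :=
  17829081826055193291804058356553501559051672201858535476448098786533924148563034028894959568801537155213151729272305232354055749845927538837789428409590511714111763662427036271743191099131128253068504974130904483178253876708879601492057436623046842983389591954559733049796137289293526864861990536943309255020419841025798718983906002371753241451279635240741293430769090582559496012315796612016703494506690029876597942887070221916943213141705645651272087457694411834504855723801612090194434065899131246362967818443724271712271607827298992501160472051644958264231722513110665872184

theorem KT_13 : KT 13 := checkA.kt (T := tabA13) (N := nbrA13) (by decide +kernel)

/-- Difference table (format A) of a Kirkman triple system of order 93. -/
def tabA15 : ℕ :=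
  62077782823839712794567830342088009071965214669277289232534268769784626041709695229576097470381759924333440203905153258416281857195024706569749663396361486178340437976403986132588402965105349304658213180300457877856527081508112753065834751348365589773716492119490618601250447457413077791980410242474952826596833651299654452655413255857821378366194759921208681115290285540316642868801383066148183078692634544184950924353627885200035850805154780154897260986819837383006674812592753132874536207421318070077572772418181631962571032648247801914061539074360167157850990959120266889908146244396328300688974493593482282469537296088558339190228471901741098467084367082769737585920

/-- Triangle table (format A) of a Kirkman triple system of order 93. -/
def nbrA15 : ℕ :=
  8678679321224601624533008391567963971713013698532695566088656135480618693617460882217595317759235889764853751034834034420287038415839592752456518287018124579062854301455412783691246423401309305571993364269744045501156443357549593605961761070726670831225383196116118551600415076727127519100938164466951850430411042538315734563971847454240144927219984349543347807641113800914412343952617041051454806034992640865183123825895997724600923305666337875849096368193215010558892374515400571210710148495575107624798378610856384501825070107356726174919679812682054746716425307210667973643553637181441032361750175725569735098244404925774791585254227412142508027352118348561951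

theorem KT_15 : KT 15 := checkA.kt (T := tabA15) (N := nbrA15) (by decide +kernel)

/-- Difference table (format A) of a Kirkman triple system of order 165. -/
def tabA27 : ℕ :=
  1172272554961456719573677390659053005114304290965983564579565743926047147988601794270250425059880869507529560467519865472458541175343103750565659339271088238311581136628552108157135957821545645645739391083004879657498973831580417353647629410766980877833542003904117082868071329594630377897356725190230597261303337182430213427075318466821206902614104924428649099050835500534120092368733781568155645437277744807696525133833991102118896383671179877166464192842939264158586177350394043863382736290184816389441954586395868127751026696401931102182694558752985120389533634176281972460614467494806801568496328902786753102246851511632176521590252778903477000791906754956101609774549003027449411577315279787672287540968896863454047274618469713487400875171798342338712314220911437493297111058284516632516284150799594996346995180141408307557185855045063986534676875407970526676259496097702023580848221112358531198883524618369601140998845058081236234045341677352993182464798691891566935231557621906634346529570638212212090793270970960827845802460517096978963579115653410017171028130534122224539111464982459110045665917926266878789650776961016348064473125406836148094676394395358728646261921266059402942976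

/-- Triangle table (format A) of a Kirkman triple system of order 165. -/
def nbrA27 : ℕ :=
  290397653794328972207687822091447026098666758842974139084197282835776543985440527193108774115635953070085886589870741944231431423165296401313612766728901210799892326857770646716796938056878543028379601183001759333760204963952838751560758576922443373893933245177527931379361477088229015758682220488458273165051946648912527594850950010455616195110152272880290185348468824695492583093218001200545553245555489016245302471075991575995443002267504030715966220259126075532026766516334151372699453387285541046039575812054276277992454540385305603456544751155706990771893849844020855377309740061003044272153153028376369584600829326525411632088214198403580325831314659664273121172995691428315719940704894608408744888598102511649847225226278000305963715361711977982189379993024075661156967150432939118991258418474943828618789166783997086932386485523096032615211614132994054859918713674160123015441678063200317453257097390338608976354012761019902011495242721474722855796936036568555196125900669378371918886017876748669656480732040028257760752520488149351445856464151817761033833676134713368523065026486061670145539844766522093076940486063914669298442391343942072841839658097797470825062580519595575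

theorem KT_27 : KT 27 := checkA.kt (T := tabA27) (N := nbrA27) (by decide +kernel)

/-- Difference table (format B) of a Kirkman triple system of order 15. -/
def tabB2 : ℕ :=
  421670197070066765308340361037260504845846827605058046244262577664

/-- Triangle table (format B) of a Kirkman triple system of order 15. -/
def nbrB2 : ℕ :=
  1159270841564600454399596923405611176035163679420223162500837408768

theorem KT_2 : KT 2 := checkB.kt (T := tabB2) (N := nbrB2) (by decide +kernel)

/-- Difference table (format B) of a Kirkman triple system of order 87. -/
def tabB14 : ℕ :=
  136343391654429890208937482737078712540963854969493943288408091144996405304561432685169131183954862085667965688642708987262263161545425505990104506181134392293018833732344912962286766987959434528361073116125070120031465758665645860732822753534680428617080677680514508430508016683851969440716357981587984197244922800693870171865853432831343842302367541327432597195442064302022081045664101050706502342603738244384512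

/-- Triangle table (format B) of a Kirkman triple system of order 87. -/
def nbrB14 : ℕ :=
  541177871327167325092542552609501072896358843487766286021893286414406962047903377275523433681054017340467133596203899363220093572396132744439785029911042519431838696840540668075196100957285438888056089816666009256145383588057798752466769792994807671339302992919423519506550355888802913936035815410301614179374523310483145360163862001213560546386245945117668351179682791718805646914516556749877715294639752204058624

theorem KT_14 : KT 14 := checkB.kt (T := tabB14) (N := nbrB14) (by decide +kernel)

/-- Difference table (format B) of a Kirkman triple system of order 159. -/
def tabB26 : ℕ :=
  16671839529598128777243935198490039783469591467897748461347385099152294023206718685164012531268408027363167052705875714261729817436395965329897233933765874245885221931183679979988104388889692626142477775210809394116482417089292460950978714991865854283985453886672567629500409874603639083272956079198823811302709751526876639733743734063068852000757232754344756788334304911156974595873976718570175485115523552598114965033284010136450975054991658607291162845562496741120935830611273715508630129249308986409787588108551328460942765996864691623977349671680747888113345137312297466095634751262535748970504484529404141503793334675115958790541805674154043611382290537458507017192510889771462185934895335495874534699945450218645705023941661821713914479772565181912909824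

/-- Triangle table (format B) of a Kirkman triple system of order 159. -/
def nbrB26 : ℕ :=
  61530089596434794775426769579875517697590890653529168424674049214247192992569850690028610192412049217601975957926077425188577610669597108635388433325996532837811356492922629774784925534496725144309773650179844001470247522063628307259251132267724277910962086762360202381913340419881358760975589175196049852875979816982425796338264267758117084881839294550924161827825194316663407950852391193676039088610071318672992445538533763719526532548174758075217706620012927057282586788561015739147122052959101328161828124405588236163897234059550428240216861464679328492048395356933482073235164028025549571637077270724234903068731739232137820268528374322169989644362604875281740742294222254320128128953845065675793790625559951894222090634132038033934339844281709931243634688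

theorem KT_26 : KT 26 := checkB.kt (T := tabB26) (N := nbrB26) (by decide +kernel)

/-! ### Normal form of a Kirkman triple system on a subset -/

/-- Points belonging to `S` (or at infinity). -/
def inP {U : Type} (S : Set U) : (U × Fin 6) ⊕ Fin 3 → Prop := Sum.elim (fun p => p.1 ∈ S) (fun _ => True)

/-- Colours belonging to `S` (or the extra colour). -/
def inC {U : Type} (S : Set U) : Option (U × Fin 3) → Prop
  | none => True
  | some x => x.1 ∈ S

theorem normalKT {U : Type} [Fintype U] [DecidableEq U] (S : Finset U) (h : KT S.card) :
    ∃ c : (U × Fin 6) ⊕ Fin 3 → (U × Fin 6) ⊕ Fin 3 → Option (U × Fin 3),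
      (∀ p q, c p q = c q p) ∧
      (∀ i j, i ≠ j → c (Sum.inr i) (Sum.inr j) = none) ∧
      (∀ p q, inC (S : Set U) (c p q)) ∧
      (∀ x p, inC (S : Set U) x → inP (S : Set U) p →
        Tri (fun a b => inP (S : Set U) a ∧ inP (S : Set U) b ∧ a ≠ b ∧ c a b = x) p) := by
  obtain ⟨c, hs, ht⟩ := h
  obtain ⟨q, r, hq, hr, hqr, h1, h2⟩ := ht 0 0
  have hx : c 0 q = 0 := ((h1 q).2 (Or.inl rfl)).2
  have hy : c 0 r = 0 := ((h1 r).2 (Or.inr rfl)).2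
  -- the three points at infinity
  let f : Fin 3 → Fin (6 * S.card + 3) := ![0, q, r]
  have hf : Function.Injective f := by
    intro i j hij
    fin_cases i <;> fin_cases j <;> simp_all [f]
  have hfc : ∀ i j, i ≠ j → c (f i) (f j) = 0 := by
    intro i j hij
    fin_cases i <;> fin_cases j <;> simp_all [f]
  classical
  have e1 : ∃ e : Fin (6 * S.card + 3) ≃ (S × Fin 6) ⊕ Fin 3, ∀ i, e (f i) = Sum.inr i := by
    let A := Equiv.ofInjective f hf
    have hc : Fintype.card ((Set.range f)ᶜ : Set _) = Fintype.card (S × Fin 6) := by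
      rw [Fintype.card_compl_set, Set.card_range_of_injective hf]
      simp
      ring
    let B := Fintype.equivOfCardEq hc
    let E := (Equiv.Set.sumCompl (Set.range f)).symm.trans
      ((Equiv.sumComm _ _).trans (Equiv.sumCongr B A.symm))
    refine ⟨E, fun i => ?_⟩
    simp only [E, Equiv.trans_apply]
    rw [Equiv.Set.sumCompl_symm_apply_of_mem (Set.mem_range_self i)]
    simp [A, Equiv.ofInjective_symm_apply]
  have e2 : ∃ k : Fin (3 * S.card + 1) ≃ Option (S × Fin 3), k 0 = none := by
    have hc : Fintype.card (Fin (3 * S.card + 1)) = Fintype.card (Option (S × Fin 3)) := by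
      simp
      ring
    let k := Fintype.equivOfCardEq hc
    exact ⟨k.trans (Equiv.swap (k 0) none), by simp⟩
  obtain ⟨e, he⟩ := e1
  obtain ⟨k, hk⟩ := e2
  -- embeddings into the big structure
  let ι : Fin (6 * S.card + 3) → (U × Fin 6) ⊕ Fin 3 :=
    fun p => Sum.map (Prod.map Subtype.val id) id (e p)
  have hι : Function.Injective ι := by
    refine Function.Injective.comp ?_ e.injective
    exact Sum.map_injective.2 ⟨Subtype.val_injective.prodMap (fun _ _ h => h), fun _ _ h => h⟩
  have hιf : ∀ i, ι (f i) = Sum.inr i := by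
    intro i
    simp [ι, he]
  have hιS : ∀ p, inP (S : Set U) (ι p) := by
    intro p
    simp only [ι]
    rcases e p with ⟨a, b⟩ | i <;> simp [inP]
  have hιsurj : ∀ p, inP (S : Set U) p → ∃ a, ι a = p := by
    rintro (⟨a, b⟩ | i) hp
    · exact ⟨e.symm (Sum.inl (⟨a, hp⟩, b)), by simp [ι]⟩
    · exact ⟨f i, hιf i⟩
  let κ : Fin (3 * S.card + 1) → Option (U × Fin 3) := fun x => (k x).map (Prod.map Subtype.val id)
  have hκ : Function.Injective κ := by
    refine Function.Injective.comp (g := Option.map (Prod.map Subtype.val id)) ?_ k.injective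
    exact Option.map_injective (f := Prod.map Subtype.val id) (Subtype.val_injective.prodMap (fun _ _ h => h))
  have hκ0 : κ 0 = none := by simp [κ, hk]
  have hκS : ∀ x, inC (S : Set U) (κ x) := by
    intro x
    simp only [κ]
    rcases k x with _ | ⟨a, b⟩ <;> simp [inC]
  have hκsurj : ∀ x, inC (S : Set U) x → ∃ a, κ a = x := by
    rintro (_ | ⟨a, b⟩) hp
    · exact ⟨0, hκ0⟩
    · exact ⟨k.symm (some (⟨a, hp⟩, b)), by simp [κ]⟩
  let g := Function.invFun ι
  have hg : ∀ p, g (ι p) = p := Function.leftInverse_invFun hι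
  refine ⟨fun p q => κ (c (g p) (g q)), fun p q => by simp only [hs (g p)], ?_, fun _ _ => hκS _, ?_⟩
  · intro i j hij
    simp only [← hιf, hg]
    rw [hfc i j hij, hκ0]
  · intro x p hx hp
    obtain ⟨x, rfl⟩ := hκsurj x hx
    obtain ⟨p, rfl⟩ := hιsurj p hp
    refine (ht x p).map ι hι ?_ ?_
    · intro s
      constructor
      · rintro ⟨-, h2, h3, h4⟩
        obtain ⟨s, rfl⟩ := hιsurj s h2
        simp only [hg] at h4
        exact ⟨s, rfl, fun h => h3 (by rw [h]), hκ h4⟩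
      · rintro ⟨b, rfl, h3, h4⟩
        refine ⟨hιS _, hιS _, hι.ne h3, ?_⟩
        simp only [hg, h4]
    · rintro a b ⟨h3, h4⟩
      refine ⟨hιS _, hιS _, hι.ne h3, ?_⟩
      simp only [hg, h4]

/-! ### Filling in the groups of a frame -/

/-- A Kirkman frame on `U × Fin 6` whose groups are given by `g`. -/
def HasFrame {U ι : Type} (g : U → ι) : Prop :=
  ∃ f : U × Fin 6 → U × Fin 6 → U × Fin 3,
    (∀ p q, f p q = f q p) ∧
    (∀ p q, g p.1 ≠ g q.1 → g (f p q).1 ≠ g p.1) ∧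
    (∀ x p, g x.1 ≠ g p.1 → Tri (fun a b => g a.1 ≠ g b.1 ∧ f a b = x) p)

theorem fillFrame {U ι : Type} [Fintype U] [DecidableEq U] [DecidableEq ι] (g : U → ι)
    (hF : HasFrame g) (hK : ∀ i, KT (Finset.univ.filter (fun a => g a = i)).card) :
    KT (Fintype.card U) := by
  obtain ⟨f, fs, f1, f2⟩ := hF
  choose cG gs g0 gc gt using fun i => normalKT _ (hK i)
  simp only [Finset.coe_filter, Finset.mem_univ, true_and] at gc gt
  let c : (U × Fin 6) ⊕ Fin 3 → (U × Fin 6) ⊕ Fin 3 → Option (U × Fin 3) := fun p q =>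
    match p, q with
    | Sum.inl p, Sum.inl q => if g p.1 = g q.1 then cG (g p.1) (Sum.inl p) (Sum.inl q) else some (f p q)
    | Sum.inl p, Sum.inr j => cG (g p.1) (Sum.inl p) (Sum.inr j)
    | Sum.inr j, Sum.inl p => cG (g p.1) (Sum.inl p) (Sum.inr j)
    | Sum.inr _, Sum.inr _ => none
  have cs : ∀ p q, c p q = c q p := by
    rintro (p | i) (q | j)
    · by_cases h : g p.1 = g q.1
      · simp only [c, h, if_true]
        exact gs _ _ _
      · simp only [c, h, Ne.symm h, if_false]
        rw [fs]
    all_goals rfl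
  have ceq : ∀ i p q, inP {a | g a = i} p → inP {a | g a = i} q → p ≠ q → c p q = cG i p q := by
    rintro i (p | j) (q | k) hp hq hpq
    · simp only [inP, Sum.elim_inl, Set.mem_ofPred_eq] at hp hq
      simp [c, hp, hq]
    · simp only [inP, Sum.elim_inl, Set.mem_ofPred_eq] at hp
      simp [c, hp]
    · simp only [inP, Sum.elim_inl, Set.mem_ofPred_eq] at hq
      simp only [c, hq]
      exact gs _ _ _
    · simp only [c]
      exact (g0 _ _ _ (by simpa using hpq)).symm
  have main : ∀ i x p, inC {a | g a = i} x → inP {a | g a = i} p →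
      (∀ s, ¬ inP {a | g a = i} s → c p s ≠ x) → Tri (fun a b => a ≠ b ∧ c a b = x) p := by
    intro i x p hx hp hsx
    refine (gt i x p hx hp).mono ?_ ?_
    · intro s
      constructor
      · rintro ⟨h1, h2, h3, h4⟩
        exact ⟨h3, (ceq i _ _ h1 h2 h3).trans h4⟩
      · rintro ⟨h3, h4⟩
        by_cases h2 : inP {a | g a = i} s
        · exact ⟨hp, h2, h3, (ceq i _ _ hp h2 h3).symm.trans h4⟩
        · exact absurd h4 (hsx s h2)
    · rintro a b ⟨h1, h2, h3, h4⟩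
      exact ⟨h3, (ceq i _ _ h1 h2 h3).trans h4⟩
  have d1 : ∀ j : Fin 3, j + 1 ≠ j := by decide
  have d2 : ∀ j : Fin 3, j + 2 ≠ j := by decide
  have d3 : ∀ j : Fin 3, j + 1 ≠ j + 2 := by decide
  have d4 : ∀ j k : Fin 3, ¬ j = k ↔ k = j + 1 ∨ k = j + 2 := by decide
  have fin : HasKTS ((U × Fin 6) ⊕ Fin 3) (Option (U × Fin 3)) := by
    refine ⟨c, cs, ?_⟩
    rintro (_ | x) p
    · rcases p with p | j
      · refine main (g p.1) none (Sum.inl p) trivial rfl ?_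
        rintro (s | j) hs
        · have : g p.1 ≠ g s.1 := fun h => hs h.symm
          simp [c, this]
        · exact absurd trivial hs
      · refine ⟨Sum.inr (j + 1), Sum.inr (j + 2), ?_, ?_, ?_, ?_, ?_, rfl⟩
        · simp
        · simp
        · simp
        · rintro (s | k)
          · simp only [reduceCtorEq, or_self, iff_false]
            rintro ⟨-, h⟩
            obtain ⟨q, r, -, -, hqr, h1, -⟩ := gt (g s.1) none (Sum.inr j) trivial trivial
            have a1 : (Sum.inr (j + 1) : (U × Fin 6) ⊕ Fin 3) = q ∨ Sum.inr (j + 1) = r := by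
              exact (h1 _).1 ⟨trivial, trivial, by simp, g0 _ _ _ (d1 j).symm⟩
            have a2 : (Sum.inr (j + 2) : (U × Fin 6) ⊕ Fin 3) = q ∨ Sum.inr (j + 2) = r := by
              exact (h1 _).1 ⟨trivial, trivial, by simp, g0 _ _ _ (d2 j).symm⟩
            have a3 : (Sum.inl s : (U × Fin 6) ⊕ Fin 3) = q ∨ Sum.inl s = r := by
              refine (h1 _).1 ⟨trivial, rfl, by simp, ?_⟩
              rw [gs]
              exact h
            have a4 : (Sum.inr (j + 1) : (U × Fin 6) ⊕ Fin 3) ≠ Sum.inr (j + 2) := by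
              simp
            clear h1 h
            grind
          · simp only [c, Sum.inr.injEq, ne_eq, and_true]
            exact d4 j k
        · simp
    · by_cases hp : inP {a | g a = g x.1} p
      · refine main (g x.1) (some x) p rfl hp ?_
        rintro (s | j) hs
        · have hs : g s.1 ≠ g x.1 := hs
          rcases p with p | j
          · have hp : g p.1 = g x.1 := hp
            have : g p.1 ≠ g s.1 := by rw [hp]; exact hs.symm
            have h2 := f1 p s this
            simp only [c, this, if_false]
            rintro h
            rw [Option.some_inj] at h
            rw [h, hp] at h2
            exact h2 rfl
          · simp only [c]
            intro h
            have := gc (g s.1) (Sum.inl s) (Sum.inr j)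
            rw [h] at this
            exact hs this.symm
        · exact absurd trivial hs
      · rcases p with p | j
        · have hp : g x.1 ≠ g p.1 := fun h => hp h.symm
          refine (f2 x p hp).map Sum.inl Sum.inl_injective ?_ ?_
          · rintro (s | j)
            · by_cases h : g p.1 = g s.1
              · simp only [Sum.inl.injEq, exists_eq_left', h, ne_eq, not_true, false_and, iff_false]
                rintro ⟨-, h2⟩
                simp only [c, h, if_true] at h2
                have := gc (g s.1) (Sum.inl p) (Sum.inl s)
                rw [h2] at this
                exact hp (this.trans h.symm)
              · simp only [Sum.inl.injEq, exists_eq_left', c, h, if_false, ne_eq, not_false_iff,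
                  true_and, Option.some_inj, and_iff_right_iff_imp]
                rintro - rfl
                exact h rfl
            · simp only [reduceCtorEq, false_and, exists_false, iff_false]
              rintro ⟨-, h2⟩
              simp only [c] at h2
              have := gc (g p.1) (Sum.inl p) (Sum.inr j)
              rw [h2] at this
              exact hp this
          · rintro a b ⟨h, h2⟩
            refine ⟨?_, ?_⟩
            · rintro h3
              rw [Sum.inl.injEq] at h3
              exact h (by rw [h3])
            · simp only [c, h, if_false, h2]
        · exact absurd trivial hp
  refine fin.toKT _ ?_ ?_
  · simp; ring
  · simp; ring

/-! ### Frames from truncated transversal designs -/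

theorem frameOfBlocks {U β : Type} (g : U → Fin 5) (K : β → Fin 5 → Prop) (pt : β → Fin 5 → U)
    (blk : U → U → β)
    (hg : ∀ B i, K B i → g (pt B i) = i)
    (bs : ∀ a b, blk a b = blk b a)
    (b1 : ∀ a b, g a ≠ g b → K (blk a b) (g a) ∧ pt (blk a b) (g a) = a)
    (b2 : ∀ B i j, K B i → K B j → i ≠ j → blk (pt B i) (pt B j) = B)
    (F : β → Fin 5 × Fin 6 → Fin 5 × Fin 6 → Fin 5 × Fin 3)
    (hF : ∀ B, FrameOn (K B) (F B)) : HasFrame g := by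
  have b1' : ∀ a b, g a ≠ g b → K (blk a b) (g b) ∧ pt (blk a b) (g b) = b := by
    intro a b h
    rw [bs]
    exact b1 b a h.symm
  let f : U × Fin 6 → U × Fin 6 → U × Fin 3 := fun p q =>
    (pt (blk p.1 q.1) (F (blk p.1 q.1) (g p.1, p.2) (g q.1, q.2)).1,
      (F (blk p.1 q.1) (g p.1, p.2) (g q.1, q.2)).2)
  have fs : ∀ p q, f p q = f q p := by
    intro p q
    simp only [f]
    rw [bs, (hF _).1]
  have ff : ∀ B i j s t, K B i → K B j → i ≠ j →
      f (pt B i, s) (pt B j, t) = (pt B (F B (i, s) (j, t)).1, (F B (i, s) (j, t)).2) := by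
    intro B i j s t hi hj hij
    simp only [f]
    rw [b2 B i j hi hj hij, hg B i hi, hg B j hj]
  refine ⟨f, fs, ?_, ?_⟩
  · intro p q h
    have := (hF (blk p.1 q.1)).2.1 (g p.1, p.2) (g q.1, q.2) (b1 _ _ h).1 (b1' _ _ h).1 h
    simp only [f]
    rw [hg _ _ this.1]
    exact this.2
  · rintro ⟨d, k⟩ ⟨a, s⟩ h
    have h : g a ≠ g d := h.symm
    obtain ⟨k1, e1⟩ := b1 a d h
    obtain ⟨k2, e2⟩ := b1' a d h
    generalize hB : blk a d = B at *
    obtain ⟨q, r, hq, hr, hqr, h1, h2⟩ := (hF B).2.2 (g d, k) (g a, s) k2 k1 h.symm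
    have hq1 := (h1 q).2 (Or.inl rfl)
    have hr1 := (h1 r).2 (Or.inr rfl)
    have fwd : ∀ p q : Fin 5 × Fin 6, (K B p.1 ∧ K B q.1 ∧ p.1 ≠ q.1 ∧ F B p q = (g d, k)) →
        (g (pt B p.1) ≠ g (pt B q.1) ∧ f (pt B p.1, p.2) (pt B q.1, q.2) = (d, k)) := by
      rintro ⟨i, s⟩ ⟨j, t⟩ ⟨h1, h2, h3, h4⟩
      refine ⟨?_, ?_⟩
      · simp only
        rw [hg _ _ h1, hg _ _ h2]
        exact h3
      · simp only
        rw [ff B i j s t h1 h2 h3, h4]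
        simp [e2]
    refine ⟨(pt B q.1, q.2), (pt B r.1, r.2), ?_, ?_, ?_, ?_, ?_⟩
    · rintro h
      have h5 : pt B q.1 = a := congrArg Prod.fst h
      apply hq1.2.2.1
      rw [← hg B q.1 hq1.2.1, h5]
    · rintro h
      have h5 : pt B r.1 = a := congrArg Prod.fst h
      apply hr1.2.2.1
      rw [← hg B r.1 hr1.2.1, h5]
    · rintro h
      have h5 : pt B q.1 = pt B r.1 := congrArg Prod.fst h
      apply h2.2.2.1
      rw [← hg B q.1 hq1.2.1, h5, hg B r.1 hr1.2.1]
    · rintro ⟨b, t⟩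
      constructor
      · rintro ⟨h3, h4⟩
        have h3 : g a ≠ g b := h3
        obtain ⟨k3, e3⟩ := b1 a b h3
        obtain ⟨k4, e4⟩ := b1' a b h3
        simp only [f, Prod.mk.injEq] at h4
        have h5 := (hF (blk a b)).2.1 (g a, s) (g b, t) k3 k4 h3
        have h6 : (F (blk a b) (g a, s) (g b, t)).1 = g d := by
          rw [← hg _ _ h5.1, h4.1]
        have h7 := b2 (blk a b) (g a) _ k3 h5.1 h5.2.symm
        rw [e3, h4.1, hB] at h7
        rw [← h7] at k4 e4 h4 h6
        have h8 := (h1 (g b, t)).1 ⟨k1, k4, h3, Prod.ext h6 h4.2⟩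
        rcases h8 with h8 | h8
        · left
          rw [← h8, e4]
        · right
          rw [← h8, e4]
      · rintro (h3 | h3) <;> rw [h3]
        · have := fwd _ _ hq1
          simp only [e1] at this
          exact this
        · have := fwd _ _ hr1
          simp only [e1] at this
          exact this
    · exact fwd _ _ h2

theorem FrameOn.congr {K K' : Fin 5 → Prop} {F} (h : FrameOn K F) (hK : K = K') :
    FrameOn K' F := hK ▸ h

theorem tdStep {R : Type} [CommRing R] [Fintype R] (e f : Fin 5 → R)
    (hu : ∀ i j, i ≠ j → IsUnit (e i * f j - e j * f i)) (h : ℕ) (hh : h ≤ Fintype.card R)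
    (km : KT (Fintype.card R)) (kh : KT h) : KT (4 * Fintype.card R + h) := by
  classical
  obtain ⟨H, -, hH⟩ := Finset.exists_subset_card_eq (s := (Finset.univ : Finset R)) hh
  let U := {p : Fin 5 × R // p.1 = 4 → p.2 ∈ H}
  let g : U → Fin 5 := fun a => a.1.1
  let val : R × R → Fin 5 → R := fun B i => e i * B.1 + f i * B.2
  have uniq : ∀ i j, i ≠ j → ∀ x y, ∃ B, val B i = x ∧ val B j = y := by
    intro i j hij x y
    obtain ⟨v, hv⟩ := (hu i j hij).exists_right_inv
    refine ⟨((f j * x - f i * y) * v, (e i * y - e j * x) * v), ?_, ?_⟩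
    · simp only [val]
      linear_combination x * hv
    · simp only [val]
      linear_combination y * hv
  have uniq2 : ∀ i j, i ≠ j → ∀ B B', val B i = val B' i → val B j = val B' j → B = B' := by
    intro i j hij B B' h1 h2
    obtain ⟨v, hv⟩ := (hu i j hij).exists_right_inv
    simp only [val] at h1 h2
    refine Prod.ext ?_ ?_
    · linear_combination (-(B.1 - B'.1)) * hv + v * f j * h1 - v * f i * h2
    · linear_combination (-(B.2 - B'.2)) * hv + v * e i * h2 - v * e j * h1
  let K : R × R → Fin 5 → Prop := fun B i => i = 4 → val B i ∈ H
  let pt : R × R → Fin 5 → U := fun B i =>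
    if hk : i = 4 → val B i ∈ H then ⟨(i, val B i), hk⟩ else ⟨(0, 0), by simp⟩
  have ptK : ∀ B i, (hk : K B i) → pt B i = ⟨(i, val B i), hk⟩ := by
    intro B i hk
    simp only [pt]
    exact dif_pos hk
  have exB : ∀ a b : U, ∃ B, g a ≠ g b → val B (g a) = a.1.2 ∧ val B (g b) = b.1.2 := by
    intro a b
    by_cases hab : g a = g b
    · exact ⟨0, fun h => absurd hab h⟩
    · obtain ⟨B, hB⟩ := uniq _ _ hab a.1.2 b.1.2
      exact ⟨B, fun _ => hB⟩
  choose blk0 hblk0 using exB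
  let blk : U → U → R × R := fun a b => if g a = g b then 0 else blk0 a b
  have hblk : ∀ a b, g a ≠ g b → val (blk a b) (g a) = a.1.2 ∧ val (blk a b) (g b) = b.1.2 := by
    intro a b hab
    simp only [blk, hab, if_false]
    exact hblk0 a b hab
  have frame : HasFrame g := by
    refine frameOfBlocks g K pt blk ?_ ?_ ?_ ?_
      (fun B => if val B 4 ∈ H then lookF tabF5 else lookF tabF4) ?_
    · intro B i hi
      rw [ptK B i hi]
    · intro a b
      by_cases hab : g a = g b
      · simp [blk, hab]
      · exact uniq2 _ _ hab _ _ ((hblk a b hab).1.trans (hblk b a (Ne.symm hab)).2.symm)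
          ((hblk a b hab).2.trans (hblk b a (Ne.symm hab)).1.symm)
    · intro a b hab
      have hk : K (blk a b) (g a) := by
        intro h4
        rw [(hblk a b hab).1]
        exact a.2 h4
      refine ⟨hk, ?_⟩
      rw [ptK _ _ hk]
      apply Subtype.ext
      exact Prod.ext rfl (hblk a b hab).1
    · intro B i j hi hj hij
      rw [ptK B i hi, ptK B j hj]
      have := hblk ⟨(i, val B i), hi⟩ ⟨(j, val B j), hj⟩ hij
      exact uniq2 i j hij _ _ this.1 this.2
    · intro B
      by_cases h4 : val B 4 ∈ H
      · simp only [h4, if_true]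
        refine frame5.congr ?_
        funext i
        simp only [K, eq_iff_iff]
        constructor
        · rintro - rfl
          exact h4
        · intro _
          exact i.2
      · simp only [h4, if_false]
        refine frame4.congr ?_
        funext i
        simp only [K, eq_iff_iff]
        constructor
        · rintro h rfl
          exact absurd h (by decide)
        · intro hi
          by_contra hc
          have : i = 4 := by
            apply Fin.ext
            have := i.2
            show i.1 = 4
            omega
          subst this
          exact h4 (hi rfl)
  have cardG : ∀ i, (Finset.univ.filter (fun a : U => g a = i)).card =
      if i = 4 then h else Fintype.card R := by
    intro i
    rw [← Fintype.card_subtype]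
    have E : {a : U // g a = i} ≃ {x : R // i = 4 → x ∈ H} :=
      { toFun := fun a => ⟨a.1.1.2, fun hi => a.1.2 (a.2.trans hi)⟩
        invFun := fun x => ⟨⟨(i, x.1), x.2⟩, rfl⟩
        left_inv := by
          rintro ⟨⟨⟨j, x⟩, hx⟩, hj⟩
          have hj : j = i := hj
          subst hj
          rfl
        right_inv := fun x => rfl }
    rw [Fintype.card_congr E]
    by_cases hi : i = 4
    · subst hi
      simp [hH]
    · simp [hi]
  have cardU : Fintype.card U = 4 * Fintype.card R + h := by
    rw [← Finset.card_univ, Finset.card_eq_sum_card_fiberwise (f := g) (t := Finset.univ) (by simp)]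
    simp only [cardG, Fin.sum_univ_five]
    simp
    ring
  rw [← cardU]
  refine fillFrame g frame ?_
  intro i
  rw [cardG]
  split_ifs
  · exact kh
  · exact km

theorem tdZMod (m h : ℕ) (h2 : m.Coprime 6) (hh : h ≤ m) (km : KT m) (kh : KT h) :
    KT (4 * m + h) := by
  have hm : m ≠ 0 := by
    rintro rfl
    simp at h2
  haveI : NeZero m := ⟨hm⟩
  have u2 : IsUnit (2 : ZMod m) := by
    have : IsUnit ((2 : ℕ) : ZMod m) :=
      (ZMod.isUnit_iff_coprime 2 m).2 (Nat.Coprime.coprime_dvd_right (by norm_num : 2 ∣ 6) h2).symm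
    simpa using this
  have u3 : IsUnit (3 : ZMod m) := by
    have : IsUnit ((3 : ℕ) : ZMod m) :=
      (ZMod.isUnit_iff_coprime 3 m).2 (Nat.Coprime.coprime_dvd_right (by norm_num : 3 ∣ 6) h2).symm
    simpa using this
  have := tdStep (R := ZMod m) ![1, 1, 1, 1, 0] ![0, 1, 2, 3, 1] ?_ h
  · simp only [ZMod.card] at this
    exact this hh km kh
  · have n2 : IsUnit (-2 : ZMod m) := u2.neg
    have n3 : IsUnit (-3 : ZMod m) := u3.neg
    have n1 : IsUnit (-1 : ZMod m) := isUnit_one.neg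
    intro i j hij
    fin_cases i <;> fin_cases j <;> first | exact absurd rfl hij | skip
    all_goals norm_num [u2, u3, n1, n2, n3]

theorem tdField (p k h : ℕ) [Fact p.Prime] (hk : k ≠ 0) (h4 : 4 ≤ p ^ k) (hh : h ≤ p ^ k)
    (km : KT (p ^ k)) (kh : KT h) : KT (4 * p ^ k + h) := by
  classical
  haveI : Fintype (GaloisField p k) := Fintype.ofFinite _
  have hc : Fintype.card (GaloisField p k) = p ^ k := by
    rw [← Nat.card_eq_fintype_card]
    exact GaloisField.card p k hk
  obtain ⟨a⟩ : Nonempty (Fin 4 ↪ GaloisField p k) :=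
    Function.Embedding.nonempty_of_card_le (by simpa [hc] using h4)
  have := tdStep (R := GaloisField p k) ![1, 1, 1, 1, 0] ![a 0, a 1, a 2, a 3, 1] ?_ h
  · rw [hc] at this
    exact this hh km kh
  · intro i j hij
    rw [isUnit_iff_ne_zero]
    fin_cases i <;> fin_cases j <;> first | exact absurd rfl hij | skip
    all_goals simp [sub_eq_zero]

/-! ### All Kirkman triple systems -/

theorem coprime6 (m : ℕ) (h : m % 6 = 1 ∨ m % 6 = 5) : m.Coprime 6 := by
  unfold Nat.Coprime
  rw [Nat.gcd_comm, Nat.gcd_rec]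
  rcases h with h | h <;> rw [h] <;> rfl

theorem KT_all (u : ℕ) : KT u := by
  induction u using Nat.strong_induction_on with
  | _ u ih =>
    have big : ∀ m, (m % 6 = 1 ∨ m % 6 = 5) → 4 * m ≤ u → u ≤ 5 * m → KT u := by
      intro m h1 h2 h3
      have := tdZMod m (u - 4 * m) (coprime6 m h1) (by omega) (ih _ (by omega)) (ih _ (by omega))
      rwa [show 4 * m + (u - 4 * m) = u by omega] at this
    have fld : ∀ p k : ℕ, p.Prime → k ≠ 0 → 4 ≤ p ^ k → 4 * p ^ k ≤ u → u ≤ 5 * p ^ k → KT u := by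
      intro p k hp h1 h4 h2 h3
      haveI : Fact p.Prime := ⟨hp⟩
      have := tdField p k (u - 4 * p ^ k) h1 h4 (by omega) (ih _ (by omega)) (ih _ (by omega))
      rwa [show 4 * p ^ k + (u - 4 * p ^ k) = u by omega] at this
    by_cases h : 68 ≤ u
    · have : ∃ m, (m % 6 = 1 ∨ m % 6 = 5) ∧ 4 * m ≤ u ∧ u ≤ 4 * m + 15 := by
        have h6 : u / 4 % 6 < 6 := Nat.mod_lt _ (by norm_num)
        by_cases ha : u / 4 % 6 = 5
        · exact ⟨u / 4, by omega, by omega, by omega⟩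
        · by_cases hb : u / 4 % 6 = 0
          · exact ⟨u / 4 - 1, by omega, by omega, by omega⟩
          · exact ⟨u / 4 - (u / 4 % 6 - 1), by omega, by omega, by omega⟩
      obtain ⟨m, h1, h2, h3⟩ := this
      exact big m h1 h2 (by omega)
    by_cases h : 64 ≤ u
    · exact fld 2 4 Nat.prime_two (by norm_num) (by norm_num) (by omega) (by omega)
    by_cases h : 52 ≤ u
    · exact big 13 (by norm_num) (by omega) (by omega)
    by_cases h : 44 ≤ u
    · exact big 11 (by norm_num) (by omega) (by omega)
    by_cases h : 36 ≤ u
    · exact fld 3 2 Nat.prime_three (by norm_num) (by norm_num) (by omega) (by omega)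
    by_cases h : 28 ≤ u
    · exact big 7 (by norm_num) (by omega) (by omega)
    by_cases h : u = 27
    · exact h ▸ KT_27
    by_cases h : u = 26
    · exact h ▸ KT_26
    by_cases h : 20 ≤ u
    · exact big 5 (by norm_num) (by omega) (by omega)
    by_cases h : 16 ≤ u
    · exact fld 2 2 Nat.prime_two (by norm_num) (by norm_num) (by omega) (by omega)
    have h : u < 16 := by omega
    clear fld ih
    interval_cases u
    · exact KT_zero
    · exact KT_1
    · exact KT_2
    · exact KT_3
    · exact big 1 (by norm_num) (by omega) (by omega)
    · exact big 1 (by norm_num) (by omega) (by omega)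
    · exact KT_6
    · exact KT_7
    · exact KT_8
    · exact KT_9
    · exact KT_10
    · exact KT_11
    · exact KT_12
    · exact KT_13
    · exact KT_14
    · exact KT_15

/-! ### Blowing up by seven -/

theorem factorOfCopies {V W : Type*} (H : SimpleGraph W) (F : SimpleGraph V) (hH : H.Connected)
    (h : ∀ v, ∃ φ : W → V, Function.Injective φ ∧ v ∈ Set.range φ ∧
      (∀ a b, F.Adj (φ a) (φ b) ↔ H.Adj a b) ∧
      (∀ a y, F.Adj (φ a) y → y ∈ Set.range φ)) : IsHFactor H F := by
  intro c
  induction c using SimpleGraph.ConnectedComponent.ind with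
  | _ v =>
    obtain ⟨φ, hi, ⟨w, hw⟩, ha, hc⟩ := h v
    have closed : ∀ x y, F.Reachable x y → x ∈ Set.range φ → y ∈ Set.range φ := by
      rintro x y ⟨p⟩ hx
      induction p with
      | nil => exact hx
      | cons hadj _ ihp =>
        obtain ⟨a, rfl⟩ := hx
        exact ihp (hc a _ hadj)
    let hom : H →g F := ⟨φ, fun {a b} hab => (ha a b).2 hab⟩
    have supp : (F.connectedComponentMk v).supp = Set.range φ := by
      ext y
      rw [SimpleGraph.ConnectedComponent.mem_supp_iff, SimpleGraph.ConnectedComponent.eq]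
      constructor
      · intro hr
        exact closed v y hr.symm ⟨w, hw⟩
      · rintro ⟨b, rfl⟩
        rw [← hw]
        exact (hH.preconnected b w).map hom
    rw [supp]
    refine ⟨(?_ : H ≃g F.induce (Set.range φ)).symm⟩
    exact ⟨Equiv.ofInjective φ hi, fun {a b} => ha a b⟩

theorem K777_connected : K777.Connected := by
  haveI : Nonempty (ZMod 7 × ZMod 3) := ⟨(0, 0)⟩
  refine ⟨fun x y => ?_⟩
  by_cases h : x.2 = y.2
  · have h1 : K777.Adj x (0, x.2 + 1) := by
      show x.2 ≠ x.2 + 1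
      generalize x.2 = z
      revert z
      decide
    have h2 : K777.Adj (0, x.2 + 1) y := by
      show x.2 + 1 ≠ y.2
      rw [← h]
      generalize x.2 = z
      revert z
      decide
    exact h1.reachable.trans h2.reachable
  · exact SimpleGraph.Adj.reachable (show K777.Adj x y from h)

/-- For `n = 42t + 21` with `t ≥ 0`, `(K_n; K_{7,7,7}^{3t+1}, K₇)` exists, i.e. the edge
set of `K_n` can be partitioned into `3t+1` `K_{7,7,7}`-factors and one `K₇`-factor. -/
theorem Kn_K777_K7_decomp (t : ℕ) :
    IsFactorDecomp (⊤ : SimpleGraph (Fin (42 * t + 21))) K777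
      (⊤ : SimpleGraph (Fin 7)) (3 * t + 1) 1 := by
  obtain ⟨c, cs, ct⟩ := KT_all t
  have hcard : Fintype.card (Fin (42 * t + 21)) = Fintype.card (Fin (6 * t + 3) × Fin 7) := by
    simp
    ring
  let e := Fintype.equivOfCardEq hcard
  let F : Fin (3 * t + 1) ⊕ Fin 1 → SimpleGraph (Fin (42 * t + 21)) := fun i =>
    match i with
    | Sum.inl x =>
      { Adj := fun a b => (e a).1 ≠ (e b).1 ∧ c (e a).1 (e b).1 = x
        symm := ⟨fun a b h => ⟨h.1.symm, by rw [cs]; exact h.2⟩⟩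
        loopless := ⟨fun a h => h.1 rfl⟩ }
    | Sum.inr _ =>
      { Adj := fun a b => (e a).1 = (e b).1 ∧ a ≠ b
        symm := ⟨fun a b h => ⟨h.1.symm, h.2.symm⟩⟩
        loopless := ⟨fun a h => h.2 rfl⟩ }
  refine ⟨F, fun i => le_top, ?_, ?_, ?_⟩
  · intro s
    induction s using Sym2.ind with
    | _ a b =>
      intro hab
      have hab : a ≠ b := hab
      by_cases h : (e a).1 = (e b).1
      · refine ⟨Sum.inr 0, ⟨h, hab⟩, ?_⟩
        rintro (x | y) hx
        · exact absurd h hx.1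
        · rw [Subsingleton.elim y 0]
      · refine ⟨Sum.inl (c (e a).1 (e b).1), ⟨h, rfl⟩, ?_⟩
        rintro (x | y) hx
        · exact congrArg Sum.inl hx.2.symm
        · exact absurd hx.1 h
  · intro x
    refine factorOfCopies _ _ K777_connected ?_
    intro v
    obtain ⟨q, r, hq, hr, hqr, h1, h2⟩ := ct x (e v).1
    obtain ⟨q1, q2⟩ := (h1 q).2 (Or.inl rfl)
    obtain ⟨r1, r2⟩ := (h1 r).2 (Or.inr rfl)
    let k : ZMod 3 → Fin (6 * t + 3) := ![(e v).1, q, r]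
    have hk : ∀ i j : ZMod 3, i ≠ j → k i ≠ k j ∧ c (k i) (k j) = x := by
      intro i j hij
      have g1 := cs q (e v).1
      have g2 := cs r (e v).1
      have g3 := cs r q
      fin_cases i <;> fin_cases j <;> first | exact absurd rfl hij | skip
      · exact ⟨q1, q2⟩
      · exact ⟨r1, r2⟩
      · exact ⟨q1.symm, g1.trans q2⟩
      · exact h2
      · exact ⟨r1.symm, g2.trans r2⟩
      · exact ⟨hqr.symm, g3.trans h2.2⟩
    have hkinj : Function.Injective k := by
      intro i j hij
      by_contra h
      exact (hk i j h).1 hij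
    -- closure: the class of colour `x` through the three points
    have hkc : ∀ i s, k i ≠ s → c (k i) s = x → ∃ j, k j = s := by
      intro i s hne hcs
      obtain ⟨q', r', -, -, hqr', h1', -⟩ := ct x (k i)
      have a0 := (h1' s).1 ⟨hne, hcs⟩
      have n1 : i ≠ i + 1 := (by decide : ∀ z : ZMod 3, z ≠ z + 1) i
      have n2 : i ≠ i + 2 := (by decide : ∀ z : ZMod 3, z ≠ z + 2) i
      have n3 : i + 1 ≠ i + 2 := (by decide : ∀ z : ZMod 3, z + 1 ≠ z + 2) i
      have a1 := (h1' (k (i + 1))).1 (hk _ _ n1)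
      have a2 := (h1' (k (i + 2))).1 (hk _ _ n2)
      have a3 := hkinj.ne n3
      have : s = k (i + 1) ∨ s = k (i + 2) := by
        clear h1' h1
        grind
      rcases this with h | h
      · exact ⟨_, h.symm⟩
      · exact ⟨_, h.symm⟩
    let d : ZMod 7 ≃ Fin 7 := Equiv.refl _
    refine ⟨fun w => e.symm (k w.2, d w.1), ?_, ?_, ?_, ?_⟩
    · intro a b hab
      have := e.symm.injective hab
      rw [Prod.mk.injEq] at this
      exact Prod.ext (d.injective this.2) (hkinj this.1)
    · refine ⟨(d.symm (e v).2, 0), ?_⟩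
      rw [Equiv.symm_apply_eq]
      exact Prod.ext rfl (d.apply_symm_apply _)
    · intro a b
      simp only [F, Equiv.apply_symm_apply]
      constructor
      · rintro ⟨h3, -⟩ h4
        exact h3 (by rw [h4])
      · intro h3
        exact hk _ _ h3
    · intro a y hy
      simp only [F, Equiv.apply_symm_apply] at hy
      obtain ⟨j, hj⟩ := hkc _ _ hy.1 hy.2
      refine ⟨(d.symm (e y).2, j), ?_⟩
      simp only
      rw [Equiv.symm_apply_eq]
      exact Prod.ext hj (d.apply_symm_apply _)
  · intro j
    refine factorOfCopies _ _ SimpleGraph.connected_top ?_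
    intro v
    refine ⟨fun w => e.symm ((e v).1, w), ?_, ⟨(e v).2, by simp⟩, ?_, ?_⟩
    · intro a b hab
      simpa using hab
    · intro a b
      simp [F]
    · intro a y hy
      simp only [F, Equiv.apply_symm_apply] at hy
      refine ⟨(e y).2, ?_⟩
      simp only
      rw [Equiv.symm_apply_eq]
      exact Prod.ext hy.1 rfl
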